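/- arXiv:1412.3775 — 6 statements merged into one kernel-verified Lean document; each statement's English description precedes it below -/
import Mathlib

section
/- For every μ ∈ [0, 1/2), the orthogonal 2×2 matrix C whose columns are v₂ and v₁ (in that order) has determinant 1; equivalently, v₂₁·v₁₂ − v₁₁·v₂₂ = 1 where v₁ = (v₁₁, v₁₂) and v₂ = (v₂₁, v₂₂). Consequently C is a rotation, and the linear change of variables z = Cw conjugates the 2×2 symplectic matrix J₂ = [[0,1],[−1,0]] to itself: C⁻¹J₂C = J₂, so the change of coordinates is symplectic. -/
/-- For `μ ∈ [0, 1/2)`, the orthogonal matrix `C` whose columns are the unit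
eigenvectors `v₂` and `v₁` (in that order) has determinant `1` (equivalently
`v₂₁·v₁₂ − v₁₁·v₂₂ = 1`), hence is a rotation, and it conjugates the symplectic
matrix `J₂ = [[0,1],[−1,0]]` to itself: `C⁻¹ J₂ C = J₂`, so the change of
coordinates `z = C w` is symplectic. -/
theorem stmt_4 (μ : ℝ) (hμ : μ ∈ Set.Ico (0 : ℝ) (1 / 2)) :
    let d : ℝ := Real.sqrt (1 - 3 * μ + 3 * μ ^ 2)
    let v₁₁ : ℝ := (1 + 2 * d) / ((2 * μ - 1) * Real.sqrt (3 + ((1 + 2 * d) / (1 - 2 * μ)) ^ 2))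
    let v₁₂ : ℝ := Real.sqrt 3 / Real.sqrt (3 + ((1 + 2 * d) / (1 - 2 * μ)) ^ 2)
    let v₂₁ : ℝ := (1 - 2 * d) / ((2 * μ - 1) * Real.sqrt (3 + ((1 - 2 * d) / (1 - 2 * μ)) ^ 2))
    let v₂₂ : ℝ := Real.sqrt 3 / Real.sqrt (3 + ((1 - 2 * d) / (1 - 2 * μ)) ^ 2)
    let C : Matrix (Fin 2) (Fin 2) ℝ := !![v₂₁, v₁₁; v₂₂, v₁₂]
    let J₂ : Matrix (Fin 2) (Fin 2) ℝ := !![0, 1; -1, 0]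
    C.det = 1 ∧ v₂₁ * v₁₂ - v₁₁ * v₂₂ = 1 ∧ C⁻¹ * J₂ * C = J₂ := by
  obtain ⟨h0, h1⟩ := hμ
  intro d v₁₁ v₁₂ v₂₁ v₂₂ C J₂
  have hm : 0 < 1 - 2 * μ := by linarith
  have hm' : 2 * μ - 1 ≠ 0 := by linarith
  have hd0 : 0 ≤ d := Real.sqrt_nonneg _
  have hd : d ^ 2 = 1 - 3 * μ + 3 * μ ^ 2 := Real.sq_sqrt (by nlinarith [sq_nonneg (2 * μ - 1)])
  obtain ⟨a, ha⟩ : ∃ a, a = (1 + 2 * d) / (1 - 2 * μ) := ⟨_, rfl⟩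
  obtain ⟨b, hb⟩ : ∃ b, b = (1 - 2 * d) / (1 - 2 * μ) := ⟨_, rfl⟩
  have hapos : 0 < a := by rw [ha]; positivity
  have hab : a * b = -3 := by
    rw [ha, hb, div_mul_div_comm, div_eq_iff (by positivity)]
    nlinarith
  obtain ⟨A, hA⟩ : ∃ A, A = Real.sqrt (3 + a ^ 2) := ⟨_, rfl⟩
  obtain ⟨B, hB⟩ : ∃ B, B = Real.sqrt (3 + b ^ 2) := ⟨_, rfl⟩
  have hApos : 0 < A := by rw [hA]; positivity
  have hBpos : 0 < B := by rw [hB]; positivity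
  have hA2 : A ^ 2 = 3 + a ^ 2 := by rw [hA]; exact Real.sq_sqrt (by positivity)
  have hB2 : B ^ 2 = 3 + b ^ 2 := by rw [hB]; exact Real.sq_sqrt (by positivity)
  obtain ⟨t, ht⟩ : ∃ t, t = Real.sqrt 3 := ⟨_, rfl⟩
  have htpos : 0 < t := by rw [ht]; positivity
  have ht2 : t ^ 2 = 3 := by rw [ht]; exact Real.sq_sqrt (by norm_num)
  have key : t * A = a * B := by
    have h : (t * A) ^ 2 = (a * B) ^ 2 := by
      rw [mul_pow, mul_pow, ht2, hA2, hB2]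
      linear_combination (3 - a * b) * hab
    exact (pow_left_inj₀ (by positivity) (by positivity) two_ne_zero).1 h
  have key2 : t * B = -b * A := by
    have : a * (t * B) = a * (-b * A) := by
      linear_combination (-t) * key + A * ht2 + A * hab
    exact mul_left_cancel₀ hapos.ne' this
  have e11 : v₁₁ = -(a / A) := by
    change (1 + 2 * d) / ((2 * μ - 1) * Real.sqrt (3 + ((1 + 2 * d) / (1 - 2 * μ)) ^ 2)) = _
    rw [← ha, ← hA, ← div_div, ← neg_div]
    congr 1
    rw [ha, ← div_neg, neg_sub]
  have e21 : v₂₁ = -(b / B) := by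
    change (1 - 2 * d) / ((2 * μ - 1) * Real.sqrt (3 + ((1 - 2 * d) / (1 - 2 * μ)) ^ 2)) = _
    rw [← hb, ← hB, ← div_div, ← neg_div]
    congr 1
    rw [hb, ← div_neg, neg_sub]
  have e12 : v₁₂ = t / A := by rw [ht, hA, ha]
  have e22 : v₂₂ = t / B := by rw [ht, hB, hb]
  have r1 : v₂₂ = -v₁₁ := by
    rw [e11, e22, neg_neg, div_eq_div_iff hBpos.ne' hApos.ne', key]
  have r2 : v₂₁ = v₁₂ := by
    rw [e12, e21, ← neg_div, div_eq_div_iff hBpos.ne' hApos.ne', key2]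
  have hdet : v₂₁ * v₁₂ - v₁₁ * v₂₂ = 1 := by
    rw [r1, r2, e12, e11]
    field_simp
    linarith
  have hC : C.det = 1 := by
    change Matrix.det !![v₂₁, v₁₁; v₂₂, v₁₂] = 1
    rw [Matrix.det_fin_two_of, hdet]
  refine ⟨hC, hdet, ?_⟩
  have hcomm : J₂ * C = C * J₂ := by
    change !![0, 1; -1, 0] * !![v₂₁, v₁₁; v₂₂, v₁₂] = !![v₂₁, v₁₁; v₂₂, v₁₂] * !![0, 1; -1, 0]
    rw [r1, r2]
    simp [Matrix.mul_fin_two]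
  rw [Matrix.mul_assoc, hcomm, ← Matrix.mul_assoc, Matrix.nonsing_inv_mul _ (by rw [hC]; exact isUnit_one),
    Matrix.one_mul]
end

section
/- For every μ ∈ [0, 1/2) and every (x̄, ȳ) ≠ (0, 0), let C be the 2×2 matrix with columns v₂ and v₁ and set (x, y) = C·(x̄, ȳ). Then (3/8)x² + (3√3/4)(1 − 2μ)·x·y + (9/8)y² + 1/√(x² + y²) = (1/2)(λ₂ x̄² + λ₁ ȳ²) + 1/√(x̄² + ȳ²); that is, the rotation C transforms the planar effective potential of the Hill four-body problem into the diagonalized form Ω̄(x̄, ȳ) = (1/2)(λ₂ x̄² + λ₁ ȳ²) + 1/√(x̄² + ȳ²). -/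
/-- For `μ ∈ [0, 1/2)`, the rotation `C` with columns `v₂`, `v₁` transforms the planar
effective potential `Ω(x,y) = (3/8)x² + (3√3/4)(1 − 2μ)xy + (9/8)y² + 1/√(x² + y²)` of
the Hill four-body problem into the diagonalized form
`Ω̄(x̄,ȳ) = (1/2)(λ₂x̄² + λ₁ȳ²) + 1/√(x̄² + ȳ²)`. -/
theorem stmt_6 (μ : ℝ) (hμ : μ ∈ Set.Ico (0 : ℝ) (1 / 2))
    (xb yb : ℝ) (hxy : (xb, yb) ≠ (0, 0)) :
    let d : ℝ := Real.sqrt (1 - 3 * μ + 3 * μ ^ 2)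
    let lam₁ : ℝ := (3 / 2) * (1 - d)
    let lam₂ : ℝ := (3 / 2) * (1 + d)
    let v₁₁ : ℝ := (1 + 2 * d) / ((2 * μ - 1) * Real.sqrt (3 + ((1 + 2 * d) / (1 - 2 * μ)) ^ 2))
    let v₁₂ : ℝ := Real.sqrt 3 / Real.sqrt (3 + ((1 + 2 * d) / (1 - 2 * μ)) ^ 2)
    let v₂₁ : ℝ := (1 - 2 * d) / ((2 * μ - 1) * Real.sqrt (3 + ((1 - 2 * d) / (1 - 2 * μ)) ^ 2))
    let v₂₂ : ℝ := Real.sqrt 3 / Real.sqrt (3 + ((1 - 2 * d) / (1 - 2 * μ)) ^ 2)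
    let x : ℝ := v₂₁ * xb + v₁₁ * yb
    let y : ℝ := v₂₂ * xb + v₁₂ * yb
    (3 / 8) * x ^ 2 + (3 * Real.sqrt 3 / 4) * (1 - 2 * μ) * x * y + (9 / 8) * y ^ 2
        + 1 / Real.sqrt (x ^ 2 + y ^ 2)
      = (1 / 2) * (lam₂ * xb ^ 2 + lam₁ * yb ^ 2) + 1 / Real.sqrt (xb ^ 2 + yb ^ 2) := by
  intro d lam₁ lam₂ v₁₁ v₁₂ v₂₁ v₂₂ x y
  obtain ⟨h0, h1⟩ := hμ
  have hm : (1 - 2 * μ) ≠ 0 := by linarith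
  have hm' : (2 * μ - 1) ≠ 0 := by linarith
  have hd : d ^ 2 = 1 - 3 * μ + 3 * μ ^ 2 :=
    Real.sq_sqrt (by nlinarith [sq_nonneg (2 * μ - 1)])
  have hs : Real.sqrt 3 ^ 2 = 3 := Real.sq_sqrt (by norm_num)
  have key : ∀ e : ℝ, ∃ k : ℝ,
      (1 + 2 * e) / ((2 * μ - 1) * Real.sqrt (3 + ((1 + 2 * e) / (1 - 2 * μ)) ^ 2))
        = -((1 + 2 * e) / (1 - 2 * μ)) * k ∧
      Real.sqrt 3 / Real.sqrt (3 + ((1 + 2 * e) / (1 - 2 * μ)) ^ 2) = Real.sqrt 3 * k ∧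
      k ^ 2 * (3 + ((1 + 2 * e) / (1 - 2 * μ)) ^ 2) = 1 := by
    intro e
    have hpos : 0 < 3 + ((1 + 2 * e) / (1 - 2 * μ)) ^ 2 := by positivity
    have hne := (Real.sqrt_pos.mpr hpos).ne'
    refine ⟨(Real.sqrt (3 + ((1 + 2 * e) / (1 - 2 * μ)) ^ 2))⁻¹, ?_, ?_, ?_⟩
    · rw [show (2 * μ - 1) = -(1 - 2 * μ) by ring, neg_mul, div_neg, div_mul_eq_div_div,
        div_eq_mul_inv _ (Real.sqrt _), neg_mul]
    · rw [div_eq_mul_inv]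
    · rw [inv_pow, Real.sq_sqrt hpos.le, inv_mul_cancel₀ hpos.ne']
  obtain ⟨k, e11, e12, hk⟩ := key d
  obtain ⟨l, e21, e22, hl⟩ := key (-d)
  rw [show 1 + 2 * (-d) = 1 - 2 * d by ring] at e21 e22 hl
  change v₁₁ = _ at e11
  change v₁₂ = _ at e12
  change v₂₁ = _ at e21
  change v₂₂ = _ at e22
  have ha : (1 + 2 * d) / (1 - 2 * μ) * (1 - 2 * μ) = 1 + 2 * d := div_mul_cancel₀ _ hm
  have hb : (1 - 2 * d) / (1 - 2 * μ) * (1 - 2 * μ) = 1 - 2 * d := div_mul_cancel₀ _ hm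
  have hab : (1 + 2 * d) / (1 - 2 * μ) * ((1 - 2 * d) / (1 - 2 * μ)) = -3 := by
    field_simp
    linear_combination (-4) * hd
  generalize (1 + 2 * d) / (1 - 2 * μ) = a at *
  generalize (1 - 2 * d) / (1 - 2 * μ) = b at *
  have n1 : v₁₁ ^ 2 + v₁₂ ^ 2 = 1 := by
    rw [e11, e12]; linear_combination hk + k ^ 2 * hs
  have n2 : v₂₁ ^ 2 + v₂₂ ^ 2 = 1 := by
    rw [e21, e22]; linear_combination hl + l ^ 2 * hs
  have n3 : v₁₁ * v₂₁ + v₁₂ * v₂₂ = 0 := by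
    rw [e11, e12, e21, e22]; linear_combination k * l * hab + k * l * hs
  have hm3 : 3 * (1 - 2 * μ) = -a * (1 - 2 * d) := by
    linear_combination (1 - 2 * μ) * hab - a * hb
  have hm4 : 3 * (1 - 2 * μ) = -b * (1 + 2 * d) := by
    linear_combination (1 - 2 * μ) * hab - b * ha
  have p1 : 3 / 4 * v₁₁ + 3 * Real.sqrt 3 / 4 * (1 - 2 * μ) * v₁₂ = lam₁ * v₁₁ := by
    rw [e11, e12]; simp only [lam₁]
    linear_combination (3 / 4 * (1 - 2 * μ) * k) * hs + 3 / 4 * k * hm3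
  have p2 : 3 * Real.sqrt 3 / 4 * (1 - 2 * μ) * v₁₁ + 9 / 4 * v₁₂ = lam₁ * v₁₂ := by
    rw [e11, e12]; simp only [lam₁]
    linear_combination (-3 / 4 * Real.sqrt 3 * k) * ha
  have q1 : 3 / 4 * v₂₁ + 3 * Real.sqrt 3 / 4 * (1 - 2 * μ) * v₂₂ = lam₂ * v₂₁ := by
    rw [e21, e22]; simp only [lam₂]
    linear_combination (3 / 4 * (1 - 2 * μ) * l) * hs + 3 / 4 * l * hm4
  have q2 : 3 * Real.sqrt 3 / 4 * (1 - 2 * μ) * v₂₁ + 9 / 4 * v₂₂ = lam₂ * v₂₂ := by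
    rw [e21, e22]; simp only [lam₂]
    linear_combination (-3 / 4 * Real.sqrt 3 * l) * hb
  have hx : x = v₂₁ * xb + v₁₁ * yb := rfl
  have hy : y = v₂₂ * xb + v₁₂ * yb := rfl
  have hn : x ^ 2 + y ^ 2 = xb ^ 2 + yb ^ 2 := by
    rw [hx, hy]; linear_combination xb ^ 2 * n2 + yb ^ 2 * n1 + 2 * xb * yb * n3
  have r1 : 3 / 4 * x + 3 * Real.sqrt 3 / 4 * (1 - 2 * μ) * y
      = lam₂ * v₂₁ * xb + lam₁ * v₁₁ * yb := by
    rw [hx, hy]; linear_combination xb * q1 + yb * p1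
  have r2 : 3 * Real.sqrt 3 / 4 * (1 - 2 * μ) * x + 9 / 4 * y
      = lam₂ * v₂₂ * xb + lam₁ * v₁₂ * yb := by
    rw [hx, hy]; linear_combination xb * q2 + yb * p2
  have hq : (3 / 8) * x ^ 2 + (3 * Real.sqrt 3 / 4) * (1 - 2 * μ) * x * y + (9 / 8) * y ^ 2
      = (1 / 2) * (lam₂ * xb ^ 2 + lam₁ * yb ^ 2) := by
    have t : (3 / 8) * x ^ 2 + (3 * Real.sqrt 3 / 4) * (1 - 2 * μ) * x * y + (9 / 8) * y ^ 2
      = 1 / 2 * (x * (lam₂ * v₂₁ * xb + lam₁ * v₁₁ * yb)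
        + y * (lam₂ * v₂₂ * xb + lam₁ * v₁₂ * yb)) := by
      linear_combination x / 2 * r1 + y / 2 * r2
    rw [t, hx, hy]
    linear_combination lam₂ * xb ^ 2 / 2 * n2 + lam₁ * yb ^ 2 / 2 * n1
      + (lam₁ + lam₂) * xb * yb / 2 * n3
  rw [hq, hn]
end

section
/- Let μ ∈ (0, 1/2]. A point (x, y) ∈ ℝ² ∖ {(0,0)} is a critical point of the rotated planar effective potential Ω̄(x,y) = (1/2)(λ₂x² + λ₁y²) + 1/√(x² + y²) if and only if it is one of the four points L₁ = (λ₂^{−1/3}, 0), L₂ = (−λ₂^{−1/3}, 0), L₃ = (0, λ₁^{−1/3}), L₄ = (0, −λ₁^{−1/3}). In particular, the Hill four-body problem has exactly four equilibrium points, given explicitly in terms of μ. -/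
lemma aux_deriv (a c e x : ℝ) (h : 0 < x ^ 2 + e) :
    HasDerivAt (fun u : ℝ => (1 / 2) * (a * u ^ 2 + c) + 1 / Real.sqrt (u ^ 2 + e))
      (x * (a - 1 / Real.sqrt (x ^ 2 + e) ^ 3)) x := by
  have hs : 0 < Real.sqrt (x ^ 2 + e) := Real.sqrt_pos.2 h
  have h1 : HasDerivAt (fun u : ℝ => u ^ 2) (2 * x) x := by
    simpa using hasDerivAt_pow 2 x
  have h2 := (h1.add_const e).sqrt h.ne'
  have h3 := h2.fun_inv hs.ne'
  have h4 := (((h1.const_mul a).add_const c).const_mul (1 / 2 : ℝ)).add h3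
  simp only [one_div] at h4 ⊢
  refine h4.congr_deriv ?_
  field_simp
  ring

lemma aux_root (a r : ℝ) (ha : 0 < a) (hr : 0 < r) :
    a - 1 / r ^ 3 = 0 ↔ r = a ^ (-(1 : ℝ) / 3) := by
  have hq : 0 < a ^ (-(1 : ℝ) / 3) := Real.rpow_pos_of_pos ha _
  have hc : (a ^ (-(1 : ℝ) / 3)) ^ 3 = 1 / a := by
    rw [← Real.rpow_natCast, ← Real.rpow_mul ha.le]
    norm_num [Real.rpow_neg_one]
  constructor
  · intro h
    have : r ^ 3 = (a ^ (-(1 : ℝ) / 3)) ^ 3 := by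
      rw [hc]
      field_simp at h ⊢
      linarith
    exact (pow_left_inj₀ hr.le hq.le (by norm_num)).1 this
  · intro h
    rw [h, hc]
    simp

lemma aux_main (a b x y : ℝ) (ha : 0 < a) (hb : 0 < b) (hab : a ≠ b) (h : (x, y) ≠ (0, 0)) :
    (x * (a - 1 / Real.sqrt (x ^ 2 + y ^ 2) ^ 3) = 0 ∧
      y * (b - 1 / Real.sqrt (x ^ 2 + y ^ 2) ^ 3) = 0) ↔
     ((x, y) = (a ^ (-(1 : ℝ) / 3), 0) ∨ (x, y) = (-a ^ (-(1 : ℝ) / 3), 0) ∨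
         (x, y) = (0, b ^ (-(1 : ℝ) / 3)) ∨ (x, y) = (0, -b ^ (-(1 : ℝ) / 3))) := by
  have hA : 0 < a ^ (-(1 : ℝ) / 3) := Real.rpow_pos_of_pos ha _
  have hB : 0 < b ^ (-(1 : ℝ) / 3) := Real.rpow_pos_of_pos hb _
  by_cases hx : x = 0
  · subst hx
    have hy : y ≠ 0 := fun h' => h (by rw [h'])
    have hr := aux_root b |y| hb (abs_pos.2 hy)
    simp only [Prod.mk.injEq, ne_eq, OfNat.ofNat_ne_zero, not_false_eq_true, zero_pow, zero_add,
      Real.sqrt_sq_eq_abs, zero_mul, true_and, mul_eq_zero, hy, false_or, and_false]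
    rw [hr, abs_eq hB.le]
  · by_cases hy : y = 0
    · subst hy
      have hr := aux_root a |x| ha (abs_pos.2 hx)
      simp only [Prod.mk.injEq, ne_eq, OfNat.ofNat_ne_zero, not_false_eq_true, zero_pow, add_zero,
        Real.sqrt_sq_eq_abs, zero_mul, and_true, mul_eq_zero, hx, false_or, false_and, or_false]
      rw [hr, abs_eq hA.le]
    · simp only [Prod.mk.injEq, mul_eq_zero, hx, hy, false_or, false_and, and_false, iff_false]
      rintro ⟨h1, h2⟩
      exact hab (by linarith)

/-- For `μ ∈ (0, 1/2]`, a point `(x,y) ≠ (0,0)` is a critical point of the rotated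
planar effective potential `Ω̄(x,y) = (1/2)(λ₂x² + λ₁y²) + 1/√(x² + y²)` of the Hill
four-body problem if and only if it is one of the four points
`L₁ = (λ₂^{−1/3}, 0)`, `L₂ = (−λ₂^{−1/3}, 0)`, `L₃ = (0, λ₁^{−1/3})`,
`L₄ = (0, −λ₁^{−1/3})`. -/
theorem stmt_9 (μ : ℝ) (hμ : μ ∈ Set.Ioc (0 : ℝ) (1 / 2)) :
    let d : ℝ := Real.sqrt (1 - 3 * μ + 3 * μ ^ 2)
    let lam₁ : ℝ := (3 / 2) * (1 - d)
    let lam₂ : ℝ := (3 / 2) * (1 + d)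
    let Ω : ℝ → ℝ → ℝ := fun x y =>
      (1 / 2) * (lam₂ * x ^ 2 + lam₁ * y ^ 2) + 1 / Real.sqrt (x ^ 2 + y ^ 2)
    ∀ x y : ℝ, (x, y) ≠ (0, 0) →
      ((deriv (fun u => Ω u y) x = 0 ∧ deriv (fun v => Ω x v) y = 0) ↔
        ((x, y) = (lam₂ ^ (-(1 : ℝ) / 3), 0) ∨ (x, y) = (-lam₂ ^ (-(1 : ℝ) / 3), 0) ∨
         (x, y) = (0, lam₁ ^ (-(1 : ℝ) / 3)) ∨ (x, y) = (0, -lam₁ ^ (-(1 : ℝ) / 3)))) := by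
  intro d lam₁ lam₂ Ω x y hxy
  obtain ⟨h0, h1⟩ := hμ
  have hd0 : 0 < d := Real.sqrt_pos.2 (by nlinarith [sq_nonneg (μ - 1 / 2)])
  have hd1 : d < 1 := by
    have : Real.sqrt (1 - 3 * μ + 3 * μ ^ 2) < 1 := by
      rw [Real.sqrt_lt' one_pos]
      nlinarith
    exact this
  have hl1 : 0 < lam₁ := by
    change 0 < (3 / 2) * (1 - d)
    linarith
  have hl2 : 0 < lam₂ := by
    change 0 < (3 / 2) * (1 + d)
    linarith
  have hne : lam₂ ≠ lam₁ := by
    change (3 / 2) * (1 + d) ≠ (3 / 2) * (1 - d)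
    intro h
    linarith
  have hpos : 0 < x ^ 2 + y ^ 2 := by
    rcases eq_or_ne x 0 with hx | hx
    · have hy : y ≠ 0 := fun h' => hxy (by rw [hx, h'])
      positivity
    · positivity
  have e1 : deriv (fun u => Ω u y) x = x * (lam₂ - 1 / Real.sqrt (x ^ 2 + y ^ 2) ^ 3) :=
    (aux_deriv lam₂ (lam₁ * y ^ 2) (y ^ 2) x hpos).deriv
  have e2 : deriv (fun v => Ω x v) y = y * (lam₁ - 1 / Real.sqrt (x ^ 2 + y ^ 2) ^ 3) := by
    have := (aux_deriv lam₁ (lam₂ * x ^ 2) (x ^ 2) y (by linarith)).deriv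
    rw [add_comm (x ^ 2) (y ^ 2), ← this]
    congr 1
    funext v
    change (1 / 2) * (lam₂ * x ^ 2 + lam₁ * v ^ 2) + 1 / Real.sqrt (x ^ 2 + v ^ 2) = _
    rw [add_comm (x ^ 2) (v ^ 2), add_comm (lam₂ * x ^ 2)]
  rw [e1, e2]
  exact aux_main lam₂ lam₁ x y hl2 hl1 hne hxy
end

section
/- For every μ ∈ [0, 1/2], set A = 4 − 3λ₂ − (λ₁ − λ₂) and B = 3λ₂(λ₁ − λ₂), where d = √(1 − 3μ + 3μ²), λ₁ = (3/2)(1 − d), λ₂ = (3/2)(1 + d). Then there exist real numbers Λ > 0 and ω > 0 such that for all z ∈ ℂ, z⁴ + Az² + B = (z − Λ)(z + Λ)(z − iω)(z + iω). In other words, the eigenvalues of the linearization of the Hill four-body problem at the equilibrium points L₁ and L₂ are ±Λ and ±iω with Λ, ω > 0, so L₁ and L₂ are of saddle-center type and are unstable for every μ ∈ [0, 1/2]. -/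
theorem factor_aux (A B : ℝ) (hB : B < 0) :
    ∃ Λ ω : ℝ, 0 < Λ ∧ 0 < ω ∧ ∀ z : ℂ,
      z ^ 4 + (A : ℂ) * z ^ 2 + (B : ℂ)
        = (z - (Λ : ℂ)) * (z + (Λ : ℂ)) * (z - Complex.I * (ω : ℂ)) * (z + Complex.I * (ω : ℂ)) := by
  obtain ⟨s, hs, hs0⟩ : ∃ s : ℝ, s ^ 2 = A ^ 2 - 4 * B ∧ 0 ≤ s :=
    ⟨Real.sqrt (A ^ 2 - 4 * B), Real.sq_sqrt (by nlinarith [sq_nonneg A]), Real.sqrt_nonneg _⟩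
  have habs : |A| < s := abs_lt_of_sq_lt_sq (by linarith) hs0
  obtain ⟨h1, h2⟩ := abs_lt.mp habs
  have hp : 0 < (s - A) / 2 := by linarith
  have hq : 0 < (s + A) / 2 := by linarith
  refine ⟨Real.sqrt ((s - A) / 2), Real.sqrt ((s + A) / 2), Real.sqrt_pos.mpr hp,
    Real.sqrt_pos.mpr hq, fun z => ?_⟩
  have e1 := Real.sq_sqrt hp.le
  have e2 := Real.sq_sqrt hq.le
  generalize Real.sqrt ((s - A) / 2) = L at *
  generalize Real.sqrt ((s + A) / 2) = w at *
  have hA : A = w ^ 2 - L ^ 2 := by linarith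
  have hB' : B = -(L ^ 2 * w ^ 2) := by rw [e1, e2]; linarith
  rw [hB', hA]
  push_cast
  linear_combination (-(z ^ 2 - (L : ℂ) ^ 2) * -(w : ℂ) ^ 2) * Complex.I_sq

/-- For `μ ∈ [0, 1/2]`, the characteristic polynomial `z⁴ + Az² + B` of the
linearization of the Hill four-body problem at the equilibrium points `L₁`, `L₂`,
with `A = 4 − 3λ₂ − (λ₁ − λ₂)` and `B = 3λ₂(λ₁ − λ₂)`, factors as
`(z − Λ)(z + Λ)(z − iω)(z + iω)` with `Λ, ω > 0`: the eigenvalues are `±Λ` and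
`±iω`, so `L₁` and `L₂` are of saddle-center type and unstable. -/
theorem stmt_12 (μ : ℝ) (hμ : μ ∈ Set.Icc (0 : ℝ) (1 / 2)) :
    let d : ℝ := Real.sqrt (1 - 3 * μ + 3 * μ ^ 2)
    let lam₁ : ℝ := (3 / 2) * (1 - d)
    let lam₂ : ℝ := (3 / 2) * (1 + d)
    let A : ℝ := 4 - 3 * lam₂ - (lam₁ - lam₂)
    let B : ℝ := 3 * lam₂ * (lam₁ - lam₂)
    ∃ Λ ω : ℝ, 0 < Λ ∧ 0 < ω ∧ ∀ z : ℂ,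
      z ^ 4 + (A : ℂ) * z ^ 2 + (B : ℂ)
        = (z - (Λ : ℂ)) * (z + (Λ : ℂ)) * (z - Complex.I * (ω : ℂ)) * (z + Complex.I * (ω : ℂ)) := by
  intro d lam₁ lam₂ A B
  apply factor_aux
  have hd : 0 < d := Real.sqrt_pos.mpr (by nlinarith [sq_nonneg (2 * μ - 1)])
  have : B = -(27 / 2) * ((1 + d) * d) := by simp only [B, lam₁, lam₂]; ring
  rw [this]
  have : 0 < (1 + d) * d := by positivity
  linarith
end

section
/- There exists a unique μ₀ ∈ (0, 1/2) such that, writing d(μ) = √(1 − 3μ + 3μ²) and D(μ) = ((3d(μ) − 1)/2)² − 4·(27/2)(1 − d(μ))d(μ), one has D(μ) > 0 for all μ ∈ (0, μ₀), D(μ₀) = 0, and D(μ) < 0 for all μ ∈ (μ₀, 1/2]. Moreover d(μ₀) = (37 + 8√21)/75. -/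
/-- There exists a unique `μ₀ ∈ (0, 1/2)` such that the discriminant
`D(μ) = ((3d(μ) − 1)/2)² − 4·(27/2)(1 − d(μ))d(μ)`, with `d(μ) = √(1 − 3μ + 3μ²)`,
is positive on `(0, μ₀)`, vanishes at `μ₀`, and is negative on `(μ₀, 1/2]`;
moreover `d(μ₀) = (37 + 8√21)/75`. -/
theorem stmt_16 :
    let d : ℝ → ℝ := fun μ => Real.sqrt (1 - 3 * μ + 3 * μ ^ 2)
    let D : ℝ → ℝ := fun μ => ((3 * d μ - 1) / 2) ^ 2 - 4 * ((27 / 2) * (1 - d μ) * d μ)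
    ∃! μ₀ : ℝ, μ₀ ∈ Set.Ioo (0 : ℝ) (1 / 2) ∧
      (∀ μ ∈ Set.Ioo (0 : ℝ) μ₀, 0 < D μ) ∧ D μ₀ = 0 ∧
      (∀ μ ∈ Set.Ioc μ₀ (1 / 2 : ℝ), D μ < 0) ∧
      d μ₀ = (37 + 8 * Real.sqrt 21) / 75 := by
  intro d D
  obtain ⟨q, hq⟩ : ∃ q : ℝ, q = Real.sqrt 21 := ⟨_, rfl⟩
  have hq2 : q ^ 2 = 21 := by rw [hq]; exact Real.sq_sqrt (by norm_num)
  have hq0 : 0 ≤ q := by rw [hq]; exact Real.sqrt_nonneg _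
  have hq1 : 4.5 < q := by nlinarith
  have hq3 : q < 4.6 := by nlinarith
  obtain ⟨r, hr⟩ : ∃ r : ℝ, r = (37 + 8 * q) / 75 := ⟨_, rfl⟩
  have hr1 : 1 / 2 < r := by rw [hr]; linarith
  have hr2 : r < 1 := by rw [hr]; linarith
  have hrq : 225 * r ^ 2 - 222 * r + 1 = 0 := by rw [hr]; nlinarith
  have hd0 : ∀ μ, 0 ≤ d μ := fun μ => Real.sqrt_nonneg _
  have hd2 : ∀ μ, d μ ^ 2 = 1 - 3 * μ + 3 * μ ^ 2 := fun μ =>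
    Real.sq_sqrt (by nlinarith [sq_nonneg (μ - 1 / 2)])
  have hdhalf : ∀ μ, 1 / 2 ≤ d μ := fun μ => by
    nlinarith [hd0 μ, hd2 μ, sq_nonneg (μ - 1 / 2)]
  have hD : ∀ μ, D μ = (d μ - r) * (225 * (d μ + r) - 222) / 4 := fun μ => by
    change ((3 * d μ - 1) / 2) ^ 2 - 4 * ((27 / 2) * (1 - d μ) * d μ) = _
    linear_combination hrq / 4
  have hpos : ∀ μ, 0 < 225 * (d μ + r) - 222 := fun μ => by
    have := hdhalf μ
    rw [hr]; linarith
  have hanti : ∀ a b : ℝ, a < b → b ≤ 1 / 2 → d b < d a := fun a b hab hb => by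
    apply Real.sqrt_lt_sqrt
    · nlinarith [sq_nonneg (b - 1 / 2)]
    · nlinarith
  obtain ⟨t, ht⟩ : ∃ t : ℝ, t = Real.sqrt (1 / 4 - (1 - r ^ 2) / 3) := ⟨_, rfl⟩
  have hrr : 1 / 4 < r ^ 2 := by nlinarith
  have hrr' : r ^ 2 < 1 := by nlinarith
  have ht2 : t ^ 2 = 1 / 4 - (1 - r ^ 2) / 3 := by rw [ht]; exact Real.sq_sqrt (by linarith)
  have ht0 : 0 < t := by rw [ht]; exact Real.sqrt_pos.2 (by linarith)
  have ht1 : t < 1 / 2 := by nlinarith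
  have hdm : d (1 / 2 - t) = r := by
    have h : d (1 / 2 - t) ^ 2 = r ^ 2 := by rw [hd2]; linear_combination 3 * ht2
    exact (sq_eq_sq₀ (hd0 _) (by linarith)).1 h
  refine ⟨1 / 2 - t, ⟨⟨by linarith, by linarith⟩, ?_, ?_, ?_, ?_⟩, ?_⟩
  · intro μ hμ
    have h := hanti μ (1 / 2 - t) hμ.2 (by linarith)
    rw [hD]
    have := mul_pos (sub_pos.2 (hdm ▸ h)) (hpos μ)
    linarith
  · rw [hD, hdm]; ring
  · intro μ hμ
    have h := hanti (1 / 2 - t) μ hμ.1 hμ.2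
    rw [hD]
    have := mul_neg_of_neg_of_pos (sub_neg.2 (hdm ▸ h)) (hpos μ)
    linarith
  · rw [hdm, hr, hq]
  · rintro y ⟨⟨_, hy⟩, _, _, _, h⟩
    rw [← hq, ← hr] at h
    rcases lt_trichotomy y (1 / 2 - t) with h1 | h1 | h1
    · have := hanti _ _ h1 (by linarith)
      linarith
    · exact h1
    · have := hanti _ _ h1 hy.le
      linarith
end

section
/- Let μ₀ ∈ (0, 1/2) be the unique value at which D(μ) = A² − 4B vanishes, where A = (3d − 1)/2, B = (27/2)(1 − d)d, d = √(1 − 3μ + 3μ²). Then: (i) for every μ ∈ (0, μ₀) there exist real ω₁ > ω₂ > 0 such that for all z ∈ ℂ, z⁴ + Az² + B = (z² + ω₁²)(z² + ω₂²), so the eigenvalues at L₃ and L₄ are two distinct pairs ±iω₁, ±iω₂ of purely imaginary numbers; (ii) for μ = μ₀ there exists ω > 0 with z⁴ + Az² + B = (z² + ω²)², so ±iω are eigenvalues of multiplicity two; (iii) for every μ ∈ (μ₀, 1/2] there exist real α > 0 and ω > 0 such that z⁴ + Az² + B = ((z − α)² + ω²)((z + α)² + ω²), so the eigenvalues are ±α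 ± iω (complex saddle). -/
lemma fac1 (A B : ℝ) (hA : 0 < A) (hB : 0 < B) (hD : 0 < A ^ 2 - 4 * B) :
    ∃ ω₁ ω₂ : ℝ, ω₂ < ω₁ ∧ 0 < ω₂ ∧
        ∀ z : ℂ, z ^ 4 + (A : ℂ) * z ^ 2 + (B : ℂ)
          = (z ^ 2 + (ω₁ : ℂ) ^ 2) * (z ^ 2 + (ω₂ : ℂ) ^ 2) := by
  obtain ⟨s, hs0, hs⟩ : ∃ s : ℝ, 0 < s ∧ s ^ 2 = A ^ 2 - 4 * B :=
    ⟨_, Real.sqrt_pos.2 hD, Real.sq_sqrt hD.le⟩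
  have hsA : s < A := by nlinarith
  have h1 : (Real.sqrt ((A + s) / 2)) ^ 2 = (A + s) / 2 := Real.sq_sqrt (by linarith)
  have h2 : (Real.sqrt ((A - s) / 2)) ^ 2 = (A - s) / 2 := Real.sq_sqrt (by linarith)
  refine ⟨Real.sqrt ((A + s) / 2), Real.sqrt ((A - s) / 2),
    Real.sqrt_lt_sqrt (by linarith) (by linarith), Real.sqrt_pos.2 (by linarith), fun z => ?_⟩
  rw [← Complex.ofReal_pow, ← Complex.ofReal_pow, h1, h2]
  have hs' : (s : ℂ) ^ 2 = (A : ℂ) ^ 2 - 4 * B := by exact_mod_cast hs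
  push_cast
  linear_combination (1 / 4 : ℂ) * hs'

lemma fac2 (A B : ℝ) (hA : 0 < A) (hD : A ^ 2 - 4 * B = 0) :
    ∃ ω : ℝ, 0 < ω ∧ ∀ z : ℂ, z ^ 4 + (A : ℂ) * z ^ 2 + (B : ℂ)
          = (z ^ 2 + (ω : ℂ) ^ 2) ^ 2 := by
  have h1 : (Real.sqrt (A / 2)) ^ 2 = A / 2 := Real.sq_sqrt (by linarith)
  refine ⟨Real.sqrt (A / 2), Real.sqrt_pos.2 (by linarith), fun z => ?_⟩
  rw [← Complex.ofReal_pow, h1]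
  have hs' : (A : ℂ) ^ 2 - 4 * B = 0 := by exact_mod_cast hD
  push_cast
  linear_combination (-1 / 4 : ℂ) * hs'

lemma fac3 (A B : ℝ) (hA : 0 < A) (hB : 0 < B) (hD : A ^ 2 - 4 * B < 0) :
    ∃ α ω : ℝ, 0 < α ∧ 0 < ω ∧
        ∀ z : ℂ, z ^ 4 + (A : ℂ) * z ^ 2 + (B : ℂ)
          = ((z - (α : ℂ)) ^ 2 + (ω : ℂ) ^ 2) * ((z + (α : ℂ)) ^ 2 + (ω : ℂ) ^ 2) := by
  obtain ⟨s, hs0, hs⟩ : ∃ s : ℝ, 0 < s ∧ s ^ 2 = B :=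
    ⟨_, Real.sqrt_pos.2 hB, Real.sq_sqrt hB.le⟩
  have hsA : A / 2 < s := by nlinarith
  have h1 : (Real.sqrt ((s - A / 2) / 2)) ^ 2 = (s - A / 2) / 2 := Real.sq_sqrt (by linarith)
  have h2 : (Real.sqrt ((s + A / 2) / 2)) ^ 2 = (s + A / 2) / 2 := Real.sq_sqrt (by linarith)
  refine ⟨Real.sqrt ((s - A / 2) / 2), Real.sqrt ((s + A / 2) / 2),
    Real.sqrt_pos.2 (by linarith), Real.sqrt_pos.2 (by linarith), fun z => ?_⟩
  generalize Real.sqrt ((s - A / 2) / 2) = a at *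
  generalize Real.sqrt ((s + A / 2) / 2) = w at *
  have e1 : A = 2 * (w ^ 2 - a ^ 2) := by linarith
  have e2 : B = (w ^ 2 + a ^ 2) ^ 2 := by
    rw [← hs, h1, h2]; ring
  rw [e1, e2]
  push_cast
  ring

lemma d_bounds (μ : ℝ) (h0 : 0 < μ) (h1 : μ ≤ 1 / 2) :
    1 / 2 ≤ Real.sqrt (1 - 3 * μ + 3 * μ ^ 2) ∧ Real.sqrt (1 - 3 * μ + 3 * μ ^ 2) < 1 := by
  constructor
  · apply Real.le_sqrt_of_sq_le
    nlinarith [sq_nonneg (μ - 1 / 2)]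
  · rw [Real.sqrt_lt' one_pos]
    nlinarith

lemma d_anti (μ ν : ℝ) (h : μ < ν) (h1 : ν ≤ 1 / 2) :
    Real.sqrt (1 - 3 * ν + 3 * ν ^ 2) < Real.sqrt (1 - 3 * μ + 3 * μ ^ 2) := by
  apply Real.sqrt_lt_sqrt
  · nlinarith [sq_nonneg (ν - 1 / 2)]
  · nlinarith

lemma D_mono (a b : ℝ) (ha : 1 / 2 ≤ a) (h : a < b) :
    ((3 * a - 1) / 2) ^ 2 - 4 * ((27 / 2) * (1 - a) * a) <
    ((3 * b - 1) / 2) ^ 2 - 4 * ((27 / 2) * (1 - b) * b) := by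
  have : 0 < (b - a) * (225 / 4 * (a + b) - 111 / 2) :=
    mul_pos (by linarith) (by linarith)
  nlinarith

/-- Let `μ₀ ∈ (0, 1/2)` be the unique value at which the discriminant `D = A² − 4B`
vanishes, where `A = (3d − 1)/2`, `B = (27/2)(1 − d)d`, `d = √(1 − 3μ + 3μ²)`. Then
at the equilibrium points `L₃`, `L₄` of the Hill four-body problem:
(i) for `μ ∈ (0, μ₀)` the characteristic polynomial factors as `(z² + ω₁²)(z² + ω₂²)`
with `ω₁ > ω₂ > 0` (two distinct purely imaginary pairs `±iω₁`, `±iω₂`);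
(ii) at `μ = μ₀` it is `(z² + ω²)²` with `ω > 0` (eigenvalues `±iω` of multiplicity two);
(iii) for `μ ∈ (μ₀, 1/2]` it is `((z − α)² + ω²)((z + α)² + ω²)` with `α, ω > 0`
(eigenvalues `±α ± iω`, complex saddle). -/
theorem stmt_17 (μ₀ : ℝ) (hμ₀ : μ₀ ∈ Set.Ioo (0 : ℝ) (1 / 2))
    (hD0 : ((3 * Real.sqrt (1 - 3 * μ₀ + 3 * μ₀ ^ 2) - 1) / 2) ^ 2
      - 4 * ((27 / 2) * (1 - Real.sqrt (1 - 3 * μ₀ + 3 * μ₀ ^ 2))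
          * Real.sqrt (1 - 3 * μ₀ + 3 * μ₀ ^ 2)) = 0) :
    let d : ℝ → ℝ := fun μ => Real.sqrt (1 - 3 * μ + 3 * μ ^ 2)
    let A : ℝ → ℝ := fun μ => (3 * d μ - 1) / 2
    let B : ℝ → ℝ := fun μ => (27 / 2) * (1 - d μ) * d μ
    (∀ μ ∈ Set.Ioo (0 : ℝ) μ₀, ∃ ω₁ ω₂ : ℝ, ω₂ < ω₁ ∧ 0 < ω₂ ∧
        ∀ z : ℂ, z ^ 4 + (A μ : ℂ) * z ^ 2 + (B μ : ℂ)
          = (z ^ 2 + (ω₁ : ℂ) ^ 2) * (z ^ 2 + (ω₂ : ℂ) ^ 2)) ∧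
      (∃ ω : ℝ, 0 < ω ∧
        ∀ z : ℂ, z ^ 4 + (A μ₀ : ℂ) * z ^ 2 + (B μ₀ : ℂ)
          = (z ^ 2 + (ω : ℂ) ^ 2) ^ 2) ∧
      (∀ μ ∈ Set.Ioc μ₀ (1 / 2 : ℝ), ∃ α ω : ℝ, 0 < α ∧ 0 < ω ∧
        ∀ z : ℂ, z ^ 4 + (A μ : ℂ) * z ^ 2 + (B μ : ℂ)
          = ((z - (α : ℂ)) ^ 2 + (ω : ℂ) ^ 2) * ((z + (α : ℂ)) ^ 2 + (ω : ℂ) ^ 2)) := by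
  intro d A B
  obtain ⟨h0, h1⟩ := hμ₀
  have hb := d_bounds μ₀ h0 h1.le
  have hA : ∀ μ : ℝ, 0 < μ → μ ≤ 1 / 2 → 0 < A μ := fun μ a b => by
    have := (d_bounds μ a b).1
    show 0 < (3 * Real.sqrt (1 - 3 * μ + 3 * μ ^ 2) - 1) / 2
    linarith
  have hB : ∀ μ : ℝ, 0 < μ → μ ≤ 1 / 2 → 0 < B μ := fun μ a b => by
    have := d_bounds μ a b
    show 0 < (27 / 2) * (1 - Real.sqrt (1 - 3 * μ + 3 * μ ^ 2)) * Real.sqrt (1 - 3 * μ + 3 * μ ^ 2)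
    exact mul_pos (mul_pos (by norm_num) (by linarith)) (by linarith)
  refine ⟨?_, ?_, ?_⟩
  · rintro μ ⟨a, b⟩
    refine fac1 _ _ (hA μ a (by linarith)) (hB μ a (by linarith)) ?_
    have := D_mono _ _ hb.1 (d_anti μ μ₀ b h1.le)
    rw [hD0] at this
    exact this
  · exact fac2 _ _ (hA μ₀ h0 h1.le) hD0
  · rintro μ ⟨a, b⟩
    have a' : 0 < μ := by linarith
    refine fac3 _ _ (hA μ a' b) (hB μ a' b) ?_
    have := D_mono _ _ (d_bounds μ a' b).1 (d_anti μ₀ μ a b)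
    rw [hD0] at this
    exact this
end
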